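/- The weighted least squares coefficients β̂(W) = (X^T W X)^{-1} X^T W y satisfy β̂_p(W) = ⟨q_p(W), y⟩ / ⟨q_p(W), x_p⟩, and more generally β̂_i(W) = (q_i(W)/⟨q_i(W),x_i⟩)^T [I - x_{i+1} q_{i+1}(W)^T/⟨q_{i+1}(W),x_{i+1}⟩] ··· [I - x_p q_p(W)^T/⟨q_p(W),x_p⟩] y for i < p. -/

import Mathlib

/-!
Put `G = Xᵀ W X`. Each Gram–Schmidt vector has the form `qᵢ = W X cᵢ` with `c` unit triangular
(`cᵢ i = 1` and `cᵢ j = 0` for `j > i`), so `⟨qᵢ, x_l⟩ = (G cᵢ) l`. Everything about the process can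
thus be read off from the symmetric matrix `G`.

* As long as the pivots `⟨q_j, x_j⟩`, `j < i`, are nonzero, `G cᵢ` vanishes at every `l < i`
  (`gram_orthogonal`). If `⟨qᵢ, xᵢ⟩` vanished too, `cᵢ` would restrict to a nonzero kernel vector
  of the `i`-th leading principal submatrix of `G`; hence all pivots are nonzero (`gram_pivot`).
* The residual `r = y - X β` satisfies `Xᵀ W r = 0`, so every `qᵢ` is orthogonal to `r`. The
  factor `I - x_k q_kᵀ / ⟨q_k, x_k⟩` therefore fixes `r` and every `x_j` with `j < k`, and kills
  `x_k`. Applied to `y = ∑ β_j x_j + r`, the product over `k > i` leaves `∑_{j ≤ i} β_j x_j + r`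
  (`prod_mulVec`), whose pairing with `qᵢ` is `β_i ⟨qᵢ, xᵢ⟩`.
-/

open Matrix

/-- Weighted simplified Gram–Schmidt process: `q₁(W) = W x₁`,
`qᵢ(W) = W xᵢ - ∑_{j<i} (⟨qⱼ(W),xᵢ⟩/⟨qⱼ(W),xⱼ⟩) qⱼ(W)`. -/
noncomputable def wgs {n p : ℕ} (W : Matrix (Fin n) (Fin n) ℝ)
    (x : Fin p → Fin n → ℝ) (i : Fin p) : Fin n → ℝ :=
  W *ᵥ x i - ∑ j : Fin p, if h : j < i then
    ((wgs W x j ⬝ᵥ x i) / (wgs W x j ⬝ᵥ x j)) • wgs W x j else 0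
termination_by i.1
decreasing_by exact h

/-- Product of the factors `[I - x_k q_k(W)ᵀ/⟨q_k(W),x_k⟩]` over indices `k > i`,
taken in increasing index order. -/
noncomputable def PprodW {n p : ℕ} (W : Matrix (Fin n) (Fin n) ℝ)
    (x : Fin p → Fin n → ℝ) (i : Fin p) : Matrix (Fin n) (Fin n) ℝ :=
  (((List.finRange p).filter (fun k => i < k)).map
    (fun k => (1 : Matrix (Fin n) (Fin n) ℝ) -
      vecMulVec (x k) ((wgs W x k ⬝ᵥ x k)⁻¹ • wgs W x k))).prod

/-- Coefficient vectors of Gram–Schmidt vectors in the original family: the recursion of `wgs` with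
`W xᵢ` replaced by the `i`-th unit vector and with prescribed elimination coefficients `a i j`. -/
noncomputable def gsCoeff {p : ℕ} (a : Fin p → Fin p → ℝ) (i : Fin p) : Fin p → ℝ :=
  Pi.single i 1 - ∑ j : Fin p, if _h : j < i then a i j • gsCoeff a j else 0
termination_by i.1
decreasing_by exact _h

lemma gsCoeff_of_gt {p : ℕ} (a : Fin p → Fin p → ℝ) (i : Fin p) :
    ∀ l, i < l → gsCoeff a i l = 0 := by
  induction i using WellFoundedLT.induction with
  | ind i ih =>
    intro l hl
    rw [gsCoeff, Pi.sub_apply, Finset.sum_apply, Pi.single_eq_of_ne hl.ne', zero_sub, neg_eq_zero]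
    refine Finset.sum_eq_zero fun j _ => ?_
    split_ifs with h
    · simp [ih j h l (h.trans hl)]
    · rfl

lemma gsCoeff_self {p : ℕ} (a : Fin p → Fin p → ℝ) (i : Fin p) : gsCoeff a i i = 1 := by
  rw [gsCoeff, Pi.sub_apply, Finset.sum_apply, Pi.single_eq_same, sub_eq_self]
  refine Finset.sum_eq_zero fun j _ => ?_
  split_ifs with h
  · simp [gsCoeff_of_gt a j i h]
  · rfl

lemma wgs_eq_mulVec {n p : ℕ} (W : Matrix (Fin n) (Fin n) ℝ) (X : Matrix (Fin n) (Fin p) ℝ)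
    (x : Fin p → Fin n → ℝ) (hx : x = fun i k => X k i) (i : Fin p) :
    wgs W x i = W *ᵥ (X *ᵥ
      gsCoeff (fun i j => (wgs W x j ⬝ᵥ x i) / (wgs W x j ⬝ᵥ x j)) i) := by
  induction i using WellFoundedLT.induction with
  | ind i ih =>
    rw [wgs, gsCoeff, mulVec_sub, mulVec_sub, mulVec_single_one, mulVec_sum, mulVec_sum]
    congr 1
    · rw [hx]; rfl
    · refine Finset.sum_congr rfl fun j _ => ?_
      split_ifs with h
      · rw [mulVec_smul, mulVec_smul, ← ih j h]
      · simp

/-- If `v` is supported on indices `≤ l` and equals `1` at `l`, while `u` vanishes below `l`,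
then `u ⬝ᵥ v` is `u l`. -/
lemma dotProduct_triangular {p : ℕ} (u v : Fin p → ℝ) (l : Fin p) (hu : ∀ m, m < l → u m = 0)
    (hv : ∀ m, l < m → v m = 0) (hl : v l = 1) : u ⬝ᵥ v = u l := by
  rw [dotProduct, Finset.sum_eq_single l]
  · rw [hl, mul_one]
  · intro m _ hm
    rcases lt_or_gt_of_ne hm with h | h
    · rw [hu m h, zero_mul]
    · rw [hv m h, mul_zero]
  · simp

/-- Orthogonality of the Gram–Schmidt process in terms of the Gram matrix, given that the
earlier pivots do not vanish. -/
lemma gram_orthogonal {p : ℕ} (G : Matrix (Fin p) (Fin p) ℝ) (hG : Gᵀ = G)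
    (a : Fin p → Fin p → ℝ)
    (ha : ∀ i j, a i j = (G *ᵥ gsCoeff a j) i / (G *ᵥ gsCoeff a j) j) (i : Fin p)
    (hd : ∀ j, j < i → (G *ᵥ gsCoeff a j) j ≠ 0) :
    ∀ l, l < i → (G *ᵥ gsCoeff a i) l = 0 := by
  have symm : ∀ u v : Fin p → ℝ, (G *ᵥ u) ⬝ᵥ v = (G *ᵥ v) ⬝ᵥ u := by
    intro u v
    rw [dotProduct_comm, dotProduct_mulVec, ← mulVec_transpose, hG]
  induction i using WellFoundedLT.induction with
  | ind i ih =>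
    have orth : ∀ j, j < i → ∀ l, l < j → (G *ᵥ gsCoeff a j) l = 0 := fun j hj =>
      ih j hj fun k hk => hd k (hk.trans hj)
    -- the form `G` diagonalizes on the earlier coefficient vectors
    have lt_zero : ∀ j l, j < i → l < j → (G *ᵥ gsCoeff a j) ⬝ᵥ gsCoeff a l = 0 := by
      intro j l hj hl
      rw [dotProduct_triangular _ _ l (fun m hm => orth j hj m (hm.trans hl))
        (gsCoeff_of_gt a l) (gsCoeff_self a l), orth j hj l hl]
    intro l
    induction l using WellFoundedLT.induction with
    | ind l ihl =>
      intro hl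
      rw [← dotProduct_triangular _ (gsCoeff a l) l (fun m hm => ihl m hm (hm.trans hl))
        (gsCoeff_of_gt a l) (gsCoeff_self a l), symm, gsCoeff.eq_def a i, dotProduct_sub,
        dotProduct_single_one, dotProduct_sum, Finset.sum_eq_single l]
      · rw [dif_pos hl, dotProduct_smul, dotProduct_triangular _ _ l (orth l hl)
          (gsCoeff_of_gt a l) (gsCoeff_self a l), ha, smul_eq_mul, div_mul_cancel₀ _ (hd l hl),
          sub_self]
      · intro j _ hj
        split_ifs with h
        · rw [dotProduct_smul]
          rcases lt_or_gt_of_ne hj with h' | h'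
          · rw [lt_zero l j hl h', smul_zero]
          · rw [symm, lt_zero j l h h', smul_zero]
        · simp
      · simp

/-- The pivots of the Gram–Schmidt process do not vanish when the leading principal minors of the
Gram matrix do not. -/
lemma gram_pivot {p : ℕ} (G : Matrix (Fin p) (Fin p) ℝ) (hG : Gᵀ = G)
    (hminors : ∀ k : Fin p, (G.submatrix (Fin.castLE k.2) (Fin.castLE k.2)).det ≠ 0)
    (a : Fin p → Fin p → ℝ)
    (ha : ∀ i j, a i j = (G *ᵥ gsCoeff a j) i / (G *ᵥ gsCoeff a j) j) (i : Fin p) :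
    (G *ᵥ gsCoeff a i) i ≠ 0 := by
  induction i using WellFoundedLT.induction with
  | ind i ih =>
    intro h0
    have orth := gram_orthogonal G hG a ha i ih
    have hker : G.submatrix (Fin.castLE i.2) (Fin.castLE i.2) *ᵥ
        (fun m => gsCoeff a i (Fin.castLE i.2 m)) = 0 := by
      ext l
      have hl : (G *ᵥ gsCoeff a i) (Fin.castLE i.2 l) = 0 := by
        rcases lt_or_eq_of_le (show Fin.castLE i.2 l ≤ i from Nat.le_of_lt_succ l.2) with h | h
        · exact orth _ h
        · rw [h, h0]
      rw [Pi.zero_apply, ← hl]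
      refine Fintype.sum_of_injective (Fin.castLE i.2) (Fin.castLE_injective _) _ _ ?_
        (fun _ => rfl)
      intro m hm
      have : i < m := by
        by_contra hle
        exact hm ⟨⟨m, Nat.lt_succ_of_le (not_lt.mp hle)⟩, rfl⟩
      simp [gsCoeff_of_gt a i m this]
    have := congrFun (eq_zero_of_mulVec_eq_zero (hminors i) hker) (Fin.last i)
    have h1 : gsCoeff a i i = 0 := this
    rw [gsCoeff_self] at h1
    exact one_ne_zero h1

/-- The oblique projections for the indices beyond `i` remove from `X β + r` exactly the
contributions of the columns beyond `i`. The list is only assumed to enumerate these indices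
increasingly, so that the induction can pass to its tail. -/
lemma prod_mulVec {n p : ℕ} (X : Matrix (Fin n) (Fin p) ℝ) (q x : Fin p → Fin n → ℝ)
    (hx : x = fun i k => X k i) (hd : ∀ i, q i ⬝ᵥ x i ≠ 0) (horth : ∀ i l, l < i → q i ⬝ᵥ x l = 0)
    (β : Fin p → ℝ) (r : Fin n → ℝ) (hr : ∀ i, q i ⬝ᵥ r = 0) (L : List (Fin p)) :
    L.Pairwise (· < ·) → ∀ i, (∀ k, k ∈ L ↔ i < k) →
    (L.map (fun k => (1 : Matrix (Fin n) (Fin n) ℝ) -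
      vecMulVec (x k) ((q k ⬝ᵥ x k)⁻¹ • q k))).prod *ᵥ (X *ᵥ β + r) =
      X *ᵥ (fun j => if j ≤ i then β j else 0) + r := by
  induction L with
  | nil =>
    intro _ i hi
    have : (fun j => if j ≤ i then β j else 0) = β := by
      ext j
      rw [if_pos]
      simpa using hi j
    rw [this]; simp
  | cons k L ih =>
    intro hL i hi
    rw [List.pairwise_cons] at hL
    have hik : i < k := (hi k).1 (by simp)
    have hmem : ∀ m, m ∈ L ↔ k < m := by
      refine fun m => ⟨hL.1 m, fun hm => ?_⟩
      rcases List.mem_cons.1 ((hi m).2 (hik.trans hm)) with h | h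
      · exact absurd h hm.ne'
      · exact h
    rw [List.map_cons, List.prod_cons, ← mulVec_mulVec, ih hL.2 k hmem]
    have hsplit : (fun j => if j ≤ k then β j else 0) =
        (fun j => if j ≤ i then β j else 0) + β k • Pi.single k 1 := by
      ext j
      by_cases hjk : j = k
      · subst hjk; simp [hik]
      · have : j ≤ k ↔ j ≤ i := by
          refine ⟨fun h => ?_, fun h => h.trans hik.le⟩
          by_contra hlt
          rcases List.mem_cons.1 ((hi j).2 (not_le.1 hlt)) with h' | h'
          · exact hjk h'
          · exact absurd (hL.1 j h') (not_lt.2 h)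
        simp [this, hjk]
    have hcol : X *ᵥ Pi.single k 1 = x k := by
      rw [mulVec_single_one, hx]; rfl
    have hzero : q k ⬝ᵥ (X *ᵥ fun j => if j ≤ i then β j else 0) = 0 := by
      rw [dotProduct_mulVec]
      refine Finset.sum_eq_zero fun j _ => ?_
      have hj : (q k ᵥ* X) j = q k ⬝ᵥ x j := by rw [hx]; rfl
      rw [hj]
      dsimp only
      split_ifs with h
      · rw [horth k j (h.trans_lt hik), zero_mul]
      · rw [mul_zero]
    rw [hsplit, mulVec_add X, mulVec_smul, hcol, sub_mulVec, one_mulVec, vecMulVec_mulVec,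
      smul_dotProduct, dotProduct_add, dotProduct_add, hzero, hr, dotProduct_smul]
    ext t
    have := hd k
    simp only [Pi.sub_apply, Pi.add_apply, Pi.smul_apply, smul_eq_mul, MulOpposite.smul_eq_mul_unop,
      MulOpposite.unop_op]
    field_simp
    ring

theorem weighted_coefficients_closed_form {n p : ℕ} (W : Matrix (Fin n) (Fin n) ℝ)
    (hWs : Wᵀ = W) (hW : IsUnit W.det)
    (X : Matrix (Fin n) (Fin (p + 1)) ℝ) (y : Fin n → ℝ)
    (x : Fin (p + 1) → Fin n → ℝ) (hx : x = fun i k => X k i)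
    (hns : IsUnit (Xᵀ * W * X).det)
    (hminors : ∀ k : Fin (p + 1),
      ((Xᵀ * W * X).submatrix (Fin.castLE k.2) (Fin.castLE k.2)).det ≠ 0)
    (β : Fin (p + 1) → ℝ) (hβ : β = ((Xᵀ * W * X)⁻¹ * (Xᵀ * W)) *ᵥ y) :
    β (Fin.last p) = (wgs W x (Fin.last p) ⬝ᵥ y) / (wgs W x (Fin.last p) ⬝ᵥ x (Fin.last p)) ∧
    ∀ i : Fin (p + 1),
      β i = ((wgs W x i ⬝ᵥ x i)⁻¹ • wgs W x i) ⬝ᵥ (PprodW W x i *ᵥ y) := by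
  let a : Fin (p + 1) → Fin (p + 1) → ℝ :=
    fun i j => (wgs W x j ⬝ᵥ x i) / (wgs W x j ⬝ᵥ x j)
  have hq : ∀ i, wgs W x i = W *ᵥ (X *ᵥ gsCoeff a i) := wgs_eq_mulVec W X x hx
  have hdot : ∀ i l, wgs W x i ⬝ᵥ x l = ((Xᵀ * W * X) *ᵥ gsCoeff a i) l := by
    intro i l
    rw [hq, ← mulVec_mulVec, ← mulVec_mulVec, dotProduct_comm, hx]
    rfl
  have hG : (Xᵀ * W * X)ᵀ = Xᵀ * W * X := by
    simp [transpose_mul, hWs, Matrix.mul_assoc]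
  have ha : ∀ i j, a i j =
      ((Xᵀ * W * X) *ᵥ gsCoeff a j) i / ((Xᵀ * W * X) *ᵥ gsCoeff a j) j := by
    intro i j
    rw [← hdot, ← hdot]
  have hpiv := gram_pivot _ hG hminors a ha
  have hd : ∀ i, wgs W x i ⬝ᵥ x i ≠ 0 := fun i => hdot i i ▸ hpiv i
  have horth : ∀ i l, l < i → wgs W x i ⬝ᵥ x l = 0 := fun i l hl =>
    (hdot i l).trans (gram_orthogonal _ hG a ha i (fun j _ => hpiv j) l hl)
  obtain ⟨r, hr⟩ : ∃ r, r = y - X *ᵥ β := ⟨_, rfl⟩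
  have hy : y = X *ᵥ β + r := by rw [hr]; abel
  -- the normal equations
  have hnormal : (Xᵀ * W) *ᵥ r = 0 := by
    rw [hr, mulVec_sub, mulVec_mulVec, hβ, mulVec_mulVec, mul_nonsing_inv_cancel_left _ _ hns,
      sub_self]
  have hqr : ∀ i, wgs W x i ⬝ᵥ r = 0 := by
    intro i
    rw [hq, dotProduct_comm, dotProduct_mulVec, ← mulVec_transpose, hWs, dotProduct_mulVec,
      ← mulVec_transpose, mulVec_mulVec, hnormal, zero_dotProduct]
  have hP : ∀ i, PprodW W x i *ᵥ y = X *ᵥ (fun j => if j ≤ i then β j else 0) + r := by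
    intro i
    rw [hy]
    exact prod_mulVec X (wgs W x) x hx hd horth β r hqr _
      ((List.pairwise_lt_finRange _).filter _) i (by simp)
  have main : ∀ i, β i = ((wgs W x i ⬝ᵥ x i)⁻¹ • wgs W x i) ⬝ᵥ (PprodW W x i *ᵥ y) := by
    intro i
    rw [hP, smul_dotProduct, dotProduct_add, hqr, add_zero, dotProduct_mulVec]
    have hsum : (wgs W x i ᵥ* X) ⬝ᵥ (fun j => if j ≤ i then β j else 0) =
        (wgs W x i ⬝ᵥ x i) * β i := by
      have hj : ∀ j, (wgs W x i ᵥ* X) j = wgs W x i ⬝ᵥ x j := fun j => by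
        simp only [vecMul, hx]
      rw [dotProduct, Finset.sum_eq_single i]
      · rw [hj, if_pos le_rfl]
      · intro j _ hji
        rcases lt_or_gt_of_ne hji with h | h
        · rw [hj, horth i j h, zero_mul]
        · rw [if_neg (not_le.2 h), mul_zero]
      · simp
    rw [hsum, smul_eq_mul, inv_mul_cancel_left₀ (hd i)]
  refine ⟨?_, main⟩
  -- the product over the indices beyond the last one is empty
  have hlast : PprodW W x (Fin.last p) *ᵥ y = y := by
    rw [hP, hy]
    simp [Fin.le_last]
  rw [main (Fin.last p), hlast, smul_dotProduct, smul_eq_mul, div_eq_inv_mul]
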